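/- Let H be a nilpotent group generated by a finite set V. Then for any g ∈ H there exist finite products x and y of elements of V (i.e., elements of the submonoid generated by V) such that g·x = y. -/

import Mathlib

theorem ore_aux {H : Type*} [Group H] (S : Submonoid H) (n : ℕ) :
    ∀ a ∈ S, ∀ b ∈ S, a⁻¹ * b ∈ Subgroup.upperCentralSeries H n →
      ∃ p ∈ S, ∃ q ∈ S, a * p = b * q := by
  induction n with
  | zero =>
    intro a _ b _ h
    rw [Subgroup.upperCentralSeries_zero, Subgroup.mem_bot, inv_mul_eq_one] at h
    exact ⟨1, S.one_mem, 1, S.one_mem, by rw [h]⟩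
  | succ n ih =>
    intro a ha b hb h
    have h2 := Subgroup.mem_upperCentralSeries_succ_iff.1 (inv_mem h) a⁻¹
    obtain ⟨p, hp, q, hq, e⟩ := ih (a * b) (S.mul_mem ha hb) (b * a) (S.mul_mem hb ha) (by
      convert h2 using 1
      simp only [commutatorElement_def]
      group)
    exact ⟨b * p, S.mul_mem hb hp, a * q, S.mul_mem ha hq, by
      rw [← mul_assoc, ← mul_assoc, e]⟩

/-- Let `H` be a nilpotent group generated by a finite set `V`.  Then for any `g ∈ H`
there are finite products `x`, `y` of elements of `V` (elements of the submonoid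
generated by `V`) with `g * x = y`. -/
theorem stmt5 {H : Type*} [Group H] [Group.IsNilpotent H] (V : Finset H)
    (hgen : Subgroup.closure (V : Set H) = ⊤) (g : H) :
    ∃ x ∈ Submonoid.closure (V : Set H), ∃ y ∈ Submonoid.closure (V : Set H),
      g * x = y := by
  obtain ⟨n, hn⟩ := Group.IsNilpotent.nilpotent H
  have hg : g ∈ Subgroup.closure (V : Set H) := by rw [hgen]; trivial
  induction hg using Subgroup.closure_induction with
  | mem v hv => exact ⟨1, one_mem _, v, Submonoid.subset_closure hv, mul_one v⟩
  | one => exact ⟨1, one_mem _, 1, one_mem _, mul_one 1⟩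
  | inv g _ h =>
    obtain ⟨x, hx, y, hy, e⟩ := h
    exact ⟨y, hy, x, hx, by rw [← e, inv_mul_cancel_left]⟩
  | mul g g' _ _ h h' =>
    obtain ⟨x, hx, y, hy, e⟩ := h
    obtain ⟨x', hx', y', hy', e'⟩ := h'
    obtain ⟨p, hp, q, hq, e2⟩ := ore_aux _ n x hx y' hy' (by rw [hn]; trivial)
    refine ⟨x' * q, mul_mem hx' hq, y * p, mul_mem hy hp, ?_⟩
    rw [mul_assoc, ← mul_assoc g', e', ← e2, ← mul_assoc, e]
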